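/- For every z > 2, every i ∈ {1, …, n} and all real s ≤ t ≤ 1, E[(W̄⁽ⁱ⁾ + t) f_z(W̄⁽ⁱ⁾ + t) − (W̄⁽ⁱ⁾ + s) f_z(W̄⁽ⁱ⁾ + s)] ≤ (25.8 + 20 e^{e² − 2}/√(2π)) · e^{−z/2} · min(1, |s| + |t|). -/

import Mathlib

open MeasureTheory ProbabilityTheory Real

/-- The standard normal cumulative distribution function. -/
noncomputable def Phi (z : ℝ) : ℝ :=
  (Real.sqrt (2 * Real.pi))⁻¹ * ∫ u in Set.Iic z, Real.exp (-u ^ 2 / 2)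

/-- The bounded solution `f_z` of the Stein equation
`f'(w) - w f(w) = 1{w ≤ z} - Φ(z)`. -/
noncomputable def fz (z w : ℝ) : ℝ :=
  if w ≤ z then Real.sqrt (2 * Real.pi) * Real.exp (w ^ 2 / 2) * Phi w * (1 - Phi z)
  else Real.sqrt (2 * Real.pi) * Real.exp (w ^ 2 / 2) * Phi z * (1 - Phi w)

/-- The derivative `f_z'`, expressed via the Stein equation. -/
noncomputable def fz' (z w : ℝ) : ℝ :=
  w * fz z w + (if w ≤ z then 1 else 0) - Phi z

/-- The truncation `x̄ᵢ = ξᵢ 1{ξᵢ ≤ 1}`. -/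
noncomputable def xbar {Ω : Type*} {n : ℕ} (ξ : Fin n → Ω → ℝ) (i : Fin n) (ω : Ω) : ℝ :=
  if ξ i ω ≤ 1 then ξ i ω else 0

/-- `W̄ = ∑ᵢ x̄ᵢ`. -/
noncomputable def Wbar {Ω : Type*} {n : ℕ} (ξ : Fin n → Ω → ℝ) (ω : Ω) : ℝ :=
  ∑ i, xbar ξ i ω

/-- `W̄⁽ⁱ⁾ = W̄ - x̄ᵢ`. -/
noncomputable def Wbari {Ω : Type*} {n : ℕ} (ξ : Fin n → Ω → ℝ) (i : Fin n) (ω : Ω) : ℝ :=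
  Wbar ξ ω - xbar ξ i ω

/-- `K̄ᵢ(t) = E[x̄ᵢ (1{0 ≤ t ≤ x̄ᵢ} - 1{x̄ᵢ ≤ t < 0})]`. -/
noncomputable def Kbar {Ω : Type*} [MeasureSpace Ω] {n : ℕ} (ξ : Fin n → Ω → ℝ)
    (i : Fin n) (t : ℝ) : ℝ :=
  ∫ ω, xbar ξ i ω * ((if 0 ≤ t ∧ t ≤ xbar ξ i ω then (1 : ℝ) else 0)
    - (if xbar ξ i ω ≤ t ∧ t < 0 then (1 : ℝ) else 0))

/-- `β₂ = ∑ᵢ E[ξᵢ² 1{|ξᵢ| > 1}]`. -/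
noncomputable def beta2 {Ω : Type*} [MeasureSpace Ω] {n : ℕ} (ξ : Fin n → Ω → ℝ) : ℝ :=
  ∑ i, ∫ ω, (if 1 < |ξ i ω| then (ξ i ω) ^ 2 else 0)

/-- `β₃ = ∑ᵢ E[|ξᵢ|³ 1{|ξᵢ| ≤ 1}]`. -/
noncomputable def beta3 {Ω : Type*} [MeasureSpace Ω] {n : ℕ} (ξ : Fin n → Ω → ℝ) : ℝ :=
  ∑ i, ∫ ω, (if |ξ i ω| ≤ 1 then |ξ i ω| ^ 3 else 0)

/-!
Write `R w = √(2π) e^{w²/2} (1 - Φ w)` for the Mills ratio. Then `f_z w = R (-w) (1 - Φ z)` for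
`w ≤ z`, and `f_z w = f_{-z} (-w)`. From `w R w ≤ 1` and `R' w = w R w - 1` one gets
`(w f_z w)' ≤ e^{-z/2} (4 e^w + 2)` away from `z`, together with matching bounds on `w f_z w`
itself, so the increment of `w f_z w` over `[a, b]` is at most `e^{-z/2} (4 e^b + 2) min(1, b - a)`.
It remains to take expectations, using `e^{x̄} ≤ 1 + x + x²`, which gives
`E e^{W̄⁽ⁱ⁾} ≤ e^{∑ E ξⱼ²}`.
-/

section NormalDistribution

lemma neg_half_mul_sq (u : ℝ) : -(1 / 2) * u ^ 2 = -u ^ 2 / 2 := by ring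

lemma integrable_exp_neg_sq_div_two : Integrable fun u : ℝ ↦ exp (-u ^ 2 / 2) := by
  simpa only [neg_half_mul_sq] using
    integrable_exp_neg_mul_sq (b := 1 / 2) (by norm_num)

lemma integral_exp_neg_sq_div_two : ∫ u : ℝ, exp (-u ^ 2 / 2) = √(2 * π) := by
  have h := integral_gaussian (1 / 2)
  rwa [div_div_eq_mul_div, div_one, mul_comm π 2, funext fun u ↦ congrArg exp (neg_half_mul_sq u)]
    at h

lemma one_sub_Phi_eq_integral_Ioi (z : ℝ) :
    1 - Phi z = (√(2 * π))⁻¹ * ∫ u in Set.Ioi z, exp (-u ^ 2 / 2) := by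
  have hsplit := intervalIntegral.integral_Iic_add_Ioi (b := z)
    integrable_exp_neg_sq_div_two.integrableOn integrable_exp_neg_sq_div_two.integrableOn
  rw [integral_exp_neg_sq_div_two] at hsplit
  have hpos : √(2 * π) ≠ 0 := by positivity
  rw [Phi, eq_sub_of_add_eq' hsplit]
  field_simp

lemma Phi_neg (z : ℝ) : Phi (-z) = 1 - Phi z := by
  have h := integral_comp_neg_Ioi z fun u : ℝ ↦ exp (-u ^ 2 / 2)
  simp only [neg_sq] at h
  rw [one_sub_Phi_eq_integral_Ioi, h, Phi]

lemma Phi_zero : Phi 0 = 1 / 2 := by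
  have h := Phi_neg 0
  rw [neg_zero] at h
  linarith

lemma Phi_nonneg (z : ℝ) : 0 ≤ Phi z := by
  unfold Phi
  positivity

lemma Phi_le_one (z : ℝ) : Phi z ≤ 1 := by
  linarith [Phi_neg z, Phi_nonneg (-z)]

lemma hasDerivAt_Phi (w : ℝ) : HasDerivAt Phi ((√(2 * π))⁻¹ * exp (-w ^ 2 / 2)) w := by
  have hcont : Continuous fun u : ℝ ↦ exp (-u ^ 2 / 2) := by fun_prop
  have hderiv := ((intervalIntegral.integral_hasDerivAt_right (hcont.intervalIntegrable 0 w)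
    (hcont.stronglyMeasurableAtFilter _ _) hcont.continuousAt).const_mul
      (√(2 * π))⁻¹).const_add (Phi 0)
  refine hderiv.congr_of_eventuallyEq (.of_forall fun x ↦ ?_)
  simp only [Phi, ← mul_add]
  rw [← intervalIntegral.integral_Iic_sub_Iic integrable_exp_neg_sq_div_two.integrableOn
    integrable_exp_neg_sq_div_two.integrableOn, add_sub_cancel]

lemma hasDerivAt_exp_neg_sq_div_two (w : ℝ) :
    HasDerivAt (fun u ↦ exp (-u ^ 2 / 2)) (-w * exp (-w ^ 2 / 2)) w :=
  ((hasDerivAt_pow 2 w).fun_neg.div_const 2).exp.congr_deriv (by push_cast; ring)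

lemma integrable_mul_exp_neg_sq_div_two : Integrable fun u : ℝ ↦ u * exp (-u ^ 2 / 2) := by
  simpa only [neg_half_mul_sq] using
    integrable_mul_exp_neg_mul_sq (b := 1 / 2) (by norm_num)

lemma integral_Ioi_mul_exp_neg_sq_div_two (w : ℝ) :
    ∫ u in Set.Ioi w, u * exp (-u ^ 2 / 2) = exp (-w ^ 2 / 2) := by
  have hlim : Filter.Tendsto (fun u : ℝ ↦ exp (-u ^ 2 / 2)) Filter.atTop (nhds 0) := by
    refine tendsto_exp_atBot.comp ?_
    simp only [neg_div]
    exact Filter.tendsto_neg_atTop_atBot.comp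
      ((Filter.tendsto_pow_atTop two_ne_zero).atTop_div_const two_pos)
  have h := integral_Ioi_of_hasDerivAt_of_tendsto' (a := w)
    (fun u _ ↦ hasDerivAt_exp_neg_sq_div_two u)
    (integrable_mul_exp_neg_sq_div_two.neg.integrableOn.congr_fun
      (fun u _ ↦ (neg_mul _ _).symm) measurableSet_Ioi) hlim
  simp only [neg_mul, integral_neg] at h
  linarith

lemma mul_one_sub_Phi_le (w : ℝ) : w * (1 - Phi w) ≤ (√(2 * π))⁻¹ * exp (-w ^ 2 / 2) := by
  have hcompare : ∫ u in Set.Ioi w, w * exp (-u ^ 2 / 2) ≤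
      ∫ u in Set.Ioi w, u * exp (-u ^ 2 / 2) :=
    setIntegral_mono_on (integrable_exp_neg_sq_div_two.const_mul w).integrableOn
      integrable_mul_exp_neg_sq_div_two.integrableOn measurableSet_Ioi
      fun u hu ↦ mul_le_mul_of_nonneg_right (le_of_lt hu) (exp_pos _).le
  rw [integral_const_mul, integral_Ioi_mul_exp_neg_sq_div_two] at hcompare
  rw [one_sub_Phi_eq_integral_Ioi, mul_left_comm]
  gcongr

end NormalDistribution

section MillsRatio

/-- The Mills ratio of the standard normal distribution: its upper tail `1 - Φ` divided by its
density. Both branches of the Stein solution are multiples of it. -/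
noncomputable def millsRatio (w : ℝ) : ℝ := √(2 * π) * exp (w ^ 2 / 2) * (1 - Phi w)

lemma two_le_sqrt_two_mul_pi : 2 ≤ √(2 * π) :=
  le_sqrt_of_sq_le (by linarith [pi_gt_three])

lemma sqrt_two_mul_pi_le_three : √(2 * π) ≤ 3 :=
  sqrt_le_iff.2 ⟨by norm_num, by linarith [pi_lt_four]⟩

lemma exp_sq_div_two_mul_exp_neg_sq_div_two (w : ℝ) : exp (w ^ 2 / 2) * exp (-w ^ 2 / 2) = 1 := by
  rw [← exp_add, neg_div, add_neg_cancel, exp_zero]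

lemma millsRatio_nonneg (w : ℝ) : 0 ≤ millsRatio w :=
  mul_nonneg (by positivity) (sub_nonneg.2 (Phi_le_one w))

lemma mul_millsRatio_le_one (w : ℝ) : w * millsRatio w ≤ 1 :=
  calc w * millsRatio w = √(2 * π) * exp (w ^ 2 / 2) * (w * (1 - Phi w)) := by
        rw [millsRatio, mul_left_comm]
    _ ≤ √(2 * π) * exp (w ^ 2 / 2) * ((√(2 * π))⁻¹ * exp (-w ^ 2 / 2)) :=
        mul_le_mul_of_nonneg_left (mul_one_sub_Phi_le w) (by positivity)
    _ = 1 := by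
        rw [mul_mul_mul_comm, exp_sq_div_two_mul_exp_neg_sq_div_two,
          mul_inv_cancel₀ (by positivity), one_mul]

lemma hasDerivAt_millsRatio (w : ℝ) : HasDerivAt millsRatio (w * millsRatio w - 1) w := by
  have h := ((((hasDerivAt_pow 2 w).div_const 2).exp.const_mul √(2 * π)).mul
    ((hasDerivAt_Phi w).const_sub 1))
  refine h.congr_deriv ?_
  have hexp := exp_sq_div_two_mul_exp_neg_sq_div_two w
  have hsqrt : √(2 * π) * (√(2 * π))⁻¹ = 1 := mul_inv_cancel₀ (by positivity)
  rw [millsRatio]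
  push_cast
  linear_combination -(√(2 * π) * (√(2 * π))⁻¹) * hexp - hsqrt

lemma antitone_millsRatio : Antitone millsRatio :=
  antitone_of_hasDerivAt_nonpos hasDerivAt_millsRatio
    fun w ↦ sub_nonpos.2 (mul_millsRatio_le_one w)

lemma millsRatio_le_sqrt_div_two {w : ℝ} (hw : 0 ≤ w) : millsRatio w ≤ √(2 * π) / 2 := by
  refine (antitone_millsRatio hw).trans_eq ?_
  rw [millsRatio, Phi_zero, zero_pow two_ne_zero, zero_div, exp_zero]
  ring

lemma one_sub_Phi_eq_millsRatio (z : ℝ) :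
    1 - Phi z = (√(2 * π))⁻¹ * (exp (-z ^ 2 / 2) * millsRatio z) := by
  have hexp := exp_sq_div_two_mul_exp_neg_sq_div_two z
  have hsqrt : √(2 * π) * (√(2 * π))⁻¹ = 1 := mul_inv_cancel₀ (by positivity)
  rw [millsRatio]
  linear_combination -(√(2 * π) * (√(2 * π))⁻¹ * (1 - Phi z)) * hexp - (1 - Phi z) * hsqrt

lemma hasDerivAt_mul_millsRatio (w : ℝ) :
    HasDerivAt (fun u ↦ u * millsRatio u) ((1 + w ^ 2) * millsRatio w - w) w :=
  ((hasDerivAt_id w).mul (hasDerivAt_millsRatio w)).congr_deriv (by simp only [id]; ring)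

lemma hasDerivAt_mul_millsRatio_neg (w : ℝ) :
    HasDerivAt (fun u ↦ u * millsRatio (-u)) ((1 + w ^ 2) * millsRatio (-w) + w) w := by
  have h := ((hasDerivAt_mul_millsRatio (-w)).comp w (hasDerivAt_neg w)).neg
  refine (h.congr_deriv (by ring)).congr_of_eventuallyEq (.of_forall fun u ↦ ?_)
  simp

lemma one_add_sq_mul_millsRatio_le {w : ℝ} (hw : 0 ≤ w) :
    (1 + w ^ 2) * millsRatio w ≤ 3 / 2 + w := by
  nlinarith [mul_le_mul_of_nonneg_left (mul_millsRatio_le_one w) hw,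
    millsRatio_le_sqrt_div_two hw, sqrt_two_mul_pi_le_three]

lemma millsRatio_neg_mul_one_sub_Phi_le (z w : ℝ) :
    millsRatio (-w) * (1 - Phi z) ≤ exp ((w ^ 2 - z ^ 2) / 2) * millsRatio z := by
  have htail : 0 ≤ 1 - Phi z := sub_nonneg.2 (Phi_le_one z)
  calc millsRatio (-w) * (1 - Phi z) = √(2 * π) * exp (w ^ 2 / 2) * Phi w * (1 - Phi z) := by
        rw [millsRatio, Phi_neg, neg_sq, sub_sub_cancel]
    _ ≤ √(2 * π) * exp (w ^ 2 / 2) * 1 * (1 - Phi z) := by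
        gcongr
        exact Phi_le_one w
    _ = exp ((w ^ 2 - z ^ 2) / 2) * millsRatio z := by
        have hexp : exp ((w ^ 2 - z ^ 2) / 2) * exp (z ^ 2 / 2) = exp (w ^ 2 / 2) := by
          rw [← exp_add]
          ring_nf
        rw [millsRatio, ← hexp]
        ring

end MillsRatio

section ExponentialBounds

lemma exp_sq_sub_sq_div_two_le {z w : ℝ} (hw : 0 ≤ w) (hwz : w ≤ z) :
    exp ((w ^ 2 - z ^ 2) / 2) ≤ 2 * exp (w - z) := by
  have hexponent : (w ^ 2 - z ^ 2) / 2 ≤ 1 / 2 + (w - z) := by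
    rcases le_total w 2 with h | h <;> nlinarith [sq_nonneg (z - 1)]
  have hsqrt : exp (1 / 2) ≤ 2 := by
    have hsq : exp (1 / 2) * exp (1 / 2) = exp 1 := by
      rw [← exp_add]
      norm_num
    nlinarith [exp_one_lt_three, exp_pos (1 / 2)]
  calc exp ((w ^ 2 - z ^ 2) / 2) ≤ exp (1 / 2) * exp (w - z) := by
        rw [← exp_add]
        exact exp_le_exp.2 hexponent
    _ ≤ 2 * exp (w - z) := by gcongr

lemma one_sub_Phi_le_exp (z : ℝ) : 1 - Phi z ≤ exp (-z / 2) := by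
  rcases le_total z 0 with hz | hz
  · exact (sub_le_self 1 (Phi_nonneg z)).trans (one_le_exp (by linarith))
  · have hexp : exp (-z ^ 2 / 2) ≤ 2 * exp (-z) := by
      simpa using exp_sq_sub_sq_div_two_le le_rfl hz
    calc 1 - Phi z = (√(2 * π))⁻¹ * (exp (-z ^ 2 / 2) * millsRatio z) :=
          one_sub_Phi_eq_millsRatio z
      _ ≤ (√(2 * π))⁻¹ * (2 * exp (-z) * (√(2 * π) / 2)) := by
          gcongr
          · exact millsRatio_nonneg z
          · exact millsRatio_le_sqrt_div_two hz
      _ = exp (-z) := by field_simp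
      _ ≤ exp (-z / 2) := exp_le_exp.2 (by linarith)

end ExponentialBounds

section SteinSolution

lemma fz_of_le {z w : ℝ} (h : w ≤ z) : fz z w = millsRatio (-w) * (1 - Phi z) := by
  rw [fz, if_pos h, millsRatio, Phi_neg, neg_sq, sub_sub_cancel]

lemma fz_of_ge {z w : ℝ} (h : z ≤ w) : fz z w = millsRatio w * Phi z := by
  rcases h.eq_or_lt with rfl | hlt
  · rw [fz, if_pos le_rfl, millsRatio, mul_right_comm]
  · rw [fz, if_neg hlt.not_ge, millsRatio, mul_right_comm]

lemma fz_neg_neg (z w : ℝ) : fz (-z) (-w) = fz z w := by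
  rcases le_total w z with h | h
  · rw [fz_of_le h, fz_of_ge (neg_le_neg h), Phi_neg]
  · rw [fz_of_ge h, fz_of_le (neg_le_neg h), Phi_neg, neg_neg, sub_sub_cancel]

lemma measurable_fz (z : ℝ) : Measurable (fz z) := by
  have hPhi : Measurable Phi :=
    (continuous_iff_continuousAt.2 fun w ↦ (hasDerivAt_Phi w).continuousAt).measurable
  exact Measurable.ite measurableSet_Iic (by fun_prop) (by fun_prop)

lemma fz_nonneg (z w : ℝ) : 0 ≤ fz z w := by
  rcases le_total w z with h | h
  · rw [fz_of_le h]
    exact mul_nonneg (millsRatio_nonneg _) (sub_nonneg.2 (Phi_le_one z))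
  · rw [fz_of_ge h]
    exact mul_nonneg (millsRatio_nonneg _) (Phi_nonneg z)

lemma mul_fz_le_exp_sq_sub_sq {z w : ℝ} (hw : 0 ≤ w) (hwz : w ≤ z) :
    w * fz z w ≤ exp ((w ^ 2 - z ^ 2) / 2) :=
  calc w * fz z w ≤ z * (exp ((w ^ 2 - z ^ 2) / 2) * millsRatio z) := by
        rw [fz_of_le hwz]
        exact mul_le_mul hwz (millsRatio_neg_mul_one_sub_Phi_le z w)
          (mul_nonneg (millsRatio_nonneg _) (sub_nonneg.2 (Phi_le_one z))) (hw.trans hwz)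
    _ = exp ((w ^ 2 - z ^ 2) / 2) * (z * millsRatio z) := by ring
    _ ≤ exp ((w ^ 2 - z ^ 2) / 2) :=
        mul_le_of_le_one_right (exp_pos _).le (mul_millsRatio_le_one z)

lemma neg_mul_fz_le_one_sub_Phi {z w : ℝ} (hwz : w ≤ z) : -(w * fz z w) ≤ 1 - Phi z := by
  rw [fz_of_le hwz, ← neg_mul, ← mul_assoc]
  exact mul_le_of_le_one_left (sub_nonneg.2 (Phi_le_one z)) (mul_millsRatio_le_one (-w))

lemma mul_fz_le_Phi {z w : ℝ} (hzw : z ≤ w) : w * fz z w ≤ Phi z := by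
  have h := neg_mul_fz_le_one_sub_Phi (neg_le_neg hzw)
  rwa [fz_neg_neg, neg_mul, neg_neg, Phi_neg, sub_sub_cancel] at h

lemma mul_fz_le_one (z w : ℝ) : w * fz z w ≤ 1 := by
  rcases le_total z w with hzw | hwz
  · exact (mul_fz_le_Phi hzw).trans (Phi_le_one z)
  rcases le_total w 0 with hw | hw
  · exact (mul_nonpos_of_nonpos_of_nonneg hw (fz_nonneg z w)).trans zero_le_one
  · exact (mul_fz_le_exp_sq_sub_sq hw hwz).trans (exp_le_one_iff.2 (by nlinarith))

lemma abs_mul_fz_le_one (z w : ℝ) : |w * fz z w| ≤ 1 := by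
  refine abs_le'.2 ⟨mul_fz_le_one z w, ?_⟩
  rw [← fz_neg_neg, ← neg_mul]
  exact mul_fz_le_one (-z) (-w)

lemma mul_fz_le_exp (z w : ℝ) : w * fz z w ≤ exp (-z / 2) * (2 * exp w) := by
  rcases le_total w 0 with hw | hw
  · exact (mul_nonpos_of_nonpos_of_nonneg hw (fz_nonneg z w)).trans (by positivity)
  rcases le_total w z with hwz | hzw
  · calc w * fz z w ≤ 2 * exp (w - z) :=
          (mul_fz_le_exp_sq_sub_sq hw hwz).trans (exp_sq_sub_sq_div_two_le hw hwz)
      _ ≤ 2 * exp (-z / 2 + w) := by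
          gcongr
          linarith
      _ = exp (-z / 2) * (2 * exp w) := by rw [exp_add, mul_left_comm]
  · have hexp : 1 ≤ exp (-z / 2) * exp w := by
      rw [← exp_add]
      exact one_le_exp (by linarith)
    linarith [mul_fz_le_one z w]

lemma neg_mul_fz_le_exp (z w : ℝ) : -(w * fz z w) ≤ exp (-z / 2) := by
  rcases le_total w z with hwz | hzw
  · exact (neg_mul_fz_le_one_sub_Phi hwz).trans (one_sub_Phi_le_exp z)
  rcases le_total 0 w with hw | hw
  · exact (neg_nonpos.2 (mul_nonneg hw (fz_nonneg z w))).trans (exp_pos _).le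
  · exact ((neg_le_abs _).trans (abs_mul_fz_le_one z w)).trans (one_le_exp (by linarith))

end SteinSolution

section Increments

lemma mul_millsRatio_neg_deriv_le {z w : ℝ} (hw : 0 ≤ w) (hwz : w ≤ z) :
    ((1 + w ^ 2) * millsRatio (-w) + w) * (1 - Phi z) ≤
      (2 + z) * exp ((w ^ 2 - z ^ 2) / 2) := by
  set E := exp ((w ^ 2 - z ^ 2) / 2) with hE
  have hmain : (1 + w ^ 2) * (millsRatio (-w) * (1 - Phi z)) ≤ (3 / 2 + z) * E :=
    calc (1 + w ^ 2) * (millsRatio (-w) * (1 - Phi z))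
        ≤ (1 + w ^ 2) * (E * millsRatio z) :=
          mul_le_mul_of_nonneg_left (millsRatio_neg_mul_one_sub_Phi_le z w) (by positivity)
      _ ≤ (1 + z ^ 2) * (E * millsRatio z) := by
          have := millsRatio_nonneg z
          gcongr
      _ = (1 + z ^ 2) * millsRatio z * E := by ring
      _ ≤ (3 / 2 + z) * E := by
          gcongr
          exact one_add_sq_mul_millsRatio_le (hw.trans hwz)
  have hrest : w * (1 - Phi z) ≤ 1 / 2 * E :=
    calc w * (1 - Phi z) ≤ z * (1 - Phi z) :=
          mul_le_mul_of_nonneg_right hwz (sub_nonneg.2 (Phi_le_one z))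
      _ ≤ (√(2 * π))⁻¹ * exp (-z ^ 2 / 2) := mul_one_sub_Phi_le z
      _ ≤ 2⁻¹ * E := by
          rw [hE]
          gcongr
          · exact two_le_sqrt_two_mul_pi
          · nlinarith
      _ = 1 / 2 * E := by rw [one_div]
  linarith

lemma mul_millsRatio_neg_deriv_le_exp {z w : ℝ} (hwz : w ≤ z) :
    ((1 + w ^ 2) * millsRatio (-w) + w) * (1 - Phi z) ≤ exp (-z / 2) * (4 * exp w + 2) := by
  rcases le_total w 0 with hw | hw
  · have hderiv : (1 + w ^ 2) * millsRatio (-w) + w ≤ 3 / 2 := by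
      have h := one_add_sq_mul_millsRatio_le (neg_nonneg.2 hw)
      rw [neg_sq] at h
      linarith
    have hpos := mul_pos (exp_pos (-z / 2)) (exp_pos w)
    linarith [mul_le_mul_of_nonneg_right hderiv (sub_nonneg.2 (Phi_le_one z)),
      one_sub_Phi_le_exp z, exp_pos (-z / 2)]
  · calc ((1 + w ^ 2) * millsRatio (-w) + w) * (1 - Phi z)
        ≤ (2 + z) * exp ((w ^ 2 - z ^ 2) / 2) := mul_millsRatio_neg_deriv_le hw hwz
      _ ≤ (2 * exp (z / 2)) * (2 * exp (w - z)) := by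
          gcongr
          · linarith [add_one_le_exp (z / 2)]
          · exact exp_sq_sub_sq_div_two_le hw hwz
      _ = exp (-z / 2) * (4 * exp w) := by
          have hexp : exp (z / 2) * exp (w - z) = exp (-z / 2) * exp w := by
            rw [← exp_add, ← exp_add]
            ring_nf
          linear_combination 4 * hexp
      _ ≤ exp (-z / 2) * (4 * exp w + 2) := by
          gcongr
          linarith

lemma mul_millsRatio_deriv_le_exp {z w : ℝ} (hzw : z ≤ w) :
    ((1 + w ^ 2) * millsRatio w - w) * Phi z ≤ exp (-z / 2) * (4 * exp w + 2) := by
  rcases le_total 0 w with hw | hw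
  · have hderiv : (1 + w ^ 2) * millsRatio w - w ≤ 3 / 2 := by
      linarith [one_add_sq_mul_millsRatio_le hw]
    have hexp : 1 ≤ exp (-z / 2) * exp w := by
      rw [← exp_add]
      exact one_le_exp (by linarith)
    linarith [mul_le_mul_of_nonneg_right hderiv (Phi_nonneg z), Phi_le_one z, exp_pos (-z / 2)]
  · have hreflect := mul_millsRatio_neg_deriv_le (neg_nonneg.2 hw) (neg_le_neg hzw)
    simp only [neg_sq, neg_neg, Phi_neg, sub_sub_cancel, ← sub_eq_add_neg] at hreflect
    have hexp : exp ((w ^ 2 - z ^ 2) / 2) ≤ 1 := exp_le_one_iff.2 (by nlinarith)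
    have hpos := mul_pos (exp_pos (-z / 2)) (exp_pos w)
    linarith [mul_le_of_le_one_right (by linarith : 0 ≤ 2 - z) hexp, add_one_le_exp (-z / 2)]

lemma hasDerivAt_exp_mul_exp_add (z w : ℝ) :
    HasDerivAt (fun u ↦ exp (-z / 2) * (4 * exp u + 2 * u)) (exp (-z / 2) * (4 * exp w + 2)) w :=
  ((((hasDerivAt_exp w).const_mul 4).add ((hasDerivAt_id w).const_mul 2)).const_mul
    (exp (-z / 2))).congr_deriv (by rw [mul_one])

lemma monotoneOn_sub_of_hasDerivAt_le {D : Set ℝ} (hD : Convex ℝ D) {F G F' G' : ℝ → ℝ}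
    (hF : ∀ x, HasDerivAt F (F' x) x) (hG : ∀ x, HasDerivAt G (G' x) x)
    (hle : ∀ x ∈ interior D, G' x ≤ F' x) : MonotoneOn (fun x ↦ F x - G x) D :=
  monotoneOn_of_hasDerivWithinAt_nonneg hD
    (fun x _ ↦ ((hF x).sub (hG x)).continuousAt.continuousWithinAt)
    (fun x _ ↦ ((hF x).sub (hG x)).hasDerivWithinAt) fun x hx ↦ sub_nonneg.2 (hle x hx)

lemma monotone_exp_sub_mul_fz (z : ℝ) :
    Monotone fun w ↦ exp (-z / 2) * (4 * exp w + 2 * w) - w * fz z w := by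
  refine MonotoneOn.Iic_union_Ici (a := z) ?_ ?_
  · refine (monotoneOn_sub_of_hasDerivAt_le (convex_Iic z) (hasDerivAt_exp_mul_exp_add z)
      (fun w ↦ (hasDerivAt_mul_millsRatio_neg w).mul_const (1 - Phi z)) fun w hw ↦
      mul_millsRatio_neg_deriv_le_exp (Set.mem_Iic.1 (interior_subset hw))).congr fun w hw ↦ ?_
    simp only [fz_of_le hw, mul_assoc]
  · refine (monotoneOn_sub_of_hasDerivAt_le (convex_Ici z) (hasDerivAt_exp_mul_exp_add z)
      (fun w ↦ (hasDerivAt_mul_millsRatio w).mul_const (Phi z)) fun w hw ↦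
      mul_millsRatio_deriv_le_exp (Set.mem_Ici.1 (interior_subset hw))).congr fun w hw ↦ ?_
    simp only [fz_of_ge hw, mul_assoc]

lemma exp_sub_exp_le (a b : ℝ) : exp b - exp a ≤ exp b * (b - a) := by
  have h := mul_le_mul_of_nonneg_left (add_one_le_exp (a - b)) (exp_pos b).le
  rw [← exp_add, add_sub_cancel] at h
  linarith

lemma mul_fz_sub_mul_fz_le (z : ℝ) {a b : ℝ} (hab : a ≤ b) :
    b * fz z b - a * fz z a ≤ exp (-z / 2) * (4 * exp b + 2) * min 1 (b - a) := by
  rw [mul_min_of_nonneg _ _ (by positivity), le_min_iff]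
  constructor
  · have hpos := mul_pos (exp_pos (-z / 2)) (exp_pos b)
    linarith [mul_fz_le_exp z b, neg_mul_fz_le_exp z a, exp_pos (-z / 2)]
  · have hmono := monotone_exp_sub_mul_fz z hab
    have hexp := mul_le_mul_of_nonneg_left (exp_sub_exp_le a b) (exp_pos (-z / 2)).le
    linarith

end Increments

section Truncation

/-- Truncation from above at `1`: values exceeding `1` are replaced by `0`, so that `xbar ξ i` is
`truncOne` applied to `ξ i`. -/
noncomputable def truncOne (x : ℝ) : ℝ := if x ≤ 1 then x else 0

lemma measurable_truncOne : Measurable truncOne :=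
  Measurable.ite measurableSet_Iic measurable_id measurable_const

lemma truncOne_le_one (x : ℝ) : truncOne x ≤ 1 := by
  unfold truncOne
  split_ifs with h
  exacts [h, zero_le_one]

lemma exp_le_one_add_add_sq {x : ℝ} (hx : x ≤ 1) : exp x ≤ 1 + x + x ^ 2 := by
  rcases le_total (-1) x with h | h
  · linarith [(abs_le.1 (abs_exp_sub_one_sub_id_le (abs_le.2 ⟨h, hx⟩))).2]
  · nlinarith [exp_le_one_iff.2 (by linarith : x ≤ 0)]

lemma exp_truncOne_le (x : ℝ) : exp (truncOne x) ≤ 1 + x + x ^ 2 := by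
  unfold truncOne
  split_ifs with h
  · exact exp_le_one_add_add_sq h
  · rw [exp_zero]
    nlinarith

lemma Wbari_eq_sum_erase {Ω : Type*} {n : ℕ} (ξ : Fin n → Ω → ℝ) (i : Fin n) (ω : Ω) :
    Wbari ξ i ω = ∑ j ∈ Finset.univ.erase i, truncOne (ξ j ω) :=
  (Finset.sum_erase_eq_sub (Finset.mem_univ i)).symm

variable {Ω ι : Type*} [MeasurableSpace Ω] {μ : Measure Ω}

lemma integrable_exp_sum_truncOne [IsFiniteMeasure μ] {X : ι → Ω → ℝ}
    (hX : ∀ j, AEMeasurable (X j) μ) (s : Finset ι) :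
    Integrable (fun ω ↦ exp (∑ j ∈ s, truncOne (X j ω))) μ := by
  have hmeas : AEMeasurable (fun ω ↦ ∑ j ∈ s, truncOne (X j ω)) μ :=
    Finset.aemeasurable_fun_sum s fun j _ ↦ measurable_truncOne.comp_aemeasurable (hX j)
  refine .of_bound hmeas.exp.aestronglyMeasurable (exp s.card) (.of_forall fun ω ↦ ?_)
  rw [norm_eq_abs, abs_exp, exp_le_exp]
  simpa using s.sum_le_card_nsmul _ 1 fun j _ ↦ truncOne_le_one (X j ω)

lemma integral_exp_truncOne_le [IsProbabilityMeasure μ] {X : Ω → ℝ} (hX : MemLp X 2 μ)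
    (hmean : ∫ ω, X ω ∂μ ≤ 0) :
    ∫ ω, exp (truncOne (X ω)) ∂μ ≤ exp (∫ ω, X ω ^ 2 ∂μ) := by
  have hX1 : Integrable X μ := hX.integrable one_le_two
  have hlin : Integrable (fun ω ↦ 1 + X ω) μ := (integrable_const 1).add hX1
  have hexp : Integrable (fun ω ↦ exp (truncOne (X ω))) μ := by
    simpa using integrable_exp_sum_truncOne (fun _ : Unit ↦ hX1.aemeasurable) Finset.univ
  calc ∫ ω, exp (truncOne (X ω)) ∂μ ≤ ∫ ω, 1 + X ω + X ω ^ 2 ∂μ :=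
        integral_mono hexp (hlin.add hX.integrable_sq) fun ω ↦ exp_truncOne_le (X ω)
    _ = 1 + ∫ ω, X ω ∂μ + ∫ ω, X ω ^ 2 ∂μ := by
        rw [integral_add hlin hX.integrable_sq, integral_add (integrable_const 1) hX1]
        simp
    _ ≤ exp (∫ ω, X ω ^ 2 ∂μ) := by linarith [add_one_le_exp (∫ ω, X ω ^ 2 ∂μ)]

lemma integral_exp_sum_truncOne_le {X : ι → Ω → ℝ} (hindep : iIndepFun X μ)
    (hX : ∀ j, MemLp (X j) 2 μ) (hmean : ∀ j, ∫ ω, X j ω ∂μ ≤ 0) (s : Finset ι) :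
    ∫ ω, exp (∑ j ∈ s, truncOne (X j ω)) ∂μ ≤ exp (∑ j ∈ s, ∫ ω, X j ω ^ 2 ∂μ) := by
  have := hindep.isProbabilityMeasure
  have hprod := (hindep.comp (fun _ ↦ truncOne) fun _ ↦ measurable_truncOne).mgf_sum₀ (t := 1)
    (fun j ↦ measurable_truncOne.comp_aemeasurable (hX j).aemeasurable) s
  simp only [mgf, one_mul, Finset.sum_apply, Function.comp_apply] at hprod
  rw [hprod, exp_sum]
  exact Finset.prod_le_prod (fun j _ ↦ integral_nonneg fun ω ↦ (exp_pos _).le)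
    fun j _ ↦ integral_exp_truncOne_le (hX j) (hmean j)

end Truncation

section Expectation

variable {Ω : Type*} [MeasurableSpace Ω] {μ : Measure Ω}

lemma integrable_mul_fz [IsFiniteMeasure μ] (z : ℝ) {W : Ω → ℝ} (hW : AEMeasurable W μ) :
    Integrable (fun ω ↦ W ω * fz z (W ω)) μ :=
  .of_bound (hW.mul ((measurable_fz z).comp_aemeasurable hW)).aestronglyMeasurable 1
    (.of_forall fun ω ↦ abs_mul_fz_le_one z (W ω))

lemma integral_mul_fz_sub_mul_fz_le [IsProbabilityMeasure μ] (z : ℝ) {W : Ω → ℝ}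
    (hW : AEMeasurable W μ) (hexp : Integrable (fun ω ↦ exp (W ω)) μ) {s t : ℝ} (hst : s ≤ t) :
    ∫ ω, ((W ω + t) * fz z (W ω + t) - (W ω + s) * fz z (W ω + s)) ∂μ ≤
      exp (-z / 2) * (4 * (∫ ω, exp (W ω) ∂μ) * exp t + 2) * min 1 (t - s) := by
  have hexp' : Integrable (fun ω ↦ 4 * exp (W ω) * exp t) μ := (hexp.const_mul 4).mul_const _
  calc ∫ ω, ((W ω + t) * fz z (W ω + t) - (W ω + s) * fz z (W ω + s)) ∂μ
      ≤ ∫ ω, exp (-z / 2) * (4 * exp (W ω) * exp t + 2) * min 1 (t - s) ∂μ := by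
        refine integral_mono
          ((integrable_mul_fz z (hW.add_const t)).sub (integrable_mul_fz z (hW.add_const s)))
          (((hexp'.add (integrable_const 2)).const_mul _).mul_const _) fun ω ↦ ?_
        have h := mul_fz_sub_mul_fz_le z (add_le_add_right hst (W ω))
        rwa [exp_add, ← mul_assoc, add_sub_add_left_eq_sub] at h
    _ = exp (-z / 2) * (4 * (∫ ω, exp (W ω) ∂μ) * exp t + 2) * min 1 (t - s) := by
        rw [integral_mul_const, integral_const_mul, integral_add hexp' (integrable_const 2),
          integral_mul_const, integral_const_mul]
        simp

end Expectation

theorem lemma84_explicit_general {Ω : Type*} [MeasurableSpace Ω] {μ : Measure Ω} {n : ℕ}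
    (ξ : Fin n → Ω → ℝ) (hindep : iIndepFun ξ μ) (hL2 : ∀ i, MemLp (ξ i) 2 μ)
    (hmean : ∀ i, ∫ ω, ξ i ω ∂μ ≤ 0) (z : ℝ) (i : Fin n) {s t : ℝ} (hst : s ≤ t) :
    ∫ ω, ((Wbari ξ i ω + t) * fz z (Wbari ξ i ω + t)
        - (Wbari ξ i ω + s) * fz z (Wbari ξ i ω + s)) ∂μ ≤
      exp (-z / 2) * (4 * exp (∑ j, ∫ ω, ξ j ω ^ 2 ∂μ) * exp t + 2) * min 1 (t - s) := by
  have := hindep.isProbabilityMeasure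
  have hmeas : ∀ j, AEMeasurable (ξ j) μ := fun j ↦ (hL2 j).aemeasurable
  have hW : AEMeasurable (fun ω ↦ ∑ j ∈ Finset.univ.erase i, truncOne (ξ j ω)) μ :=
    Finset.aemeasurable_fun_sum _ fun j _ ↦ measurable_truncOne.comp_aemeasurable (hmeas j)
  have hmgf : ∫ ω, exp (∑ j ∈ Finset.univ.erase i, truncOne (ξ j ω)) ∂μ ≤
      exp (∑ j, ∫ ω, ξ j ω ^ 2 ∂μ) :=
    (integral_exp_sum_truncOne_le hindep hL2 hmean _).trans <| exp_le_exp.2 <|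
      Finset.sum_le_sum_of_subset_of_nonneg (Finset.erase_subset i _)
        fun j _ _ ↦ integral_nonneg fun ω ↦ sq_nonneg (ξ j ω)
  have : 0 ≤ min 1 (t - s) := le_min zero_le_one (sub_nonneg.2 hst)
  simp only [Wbari_eq_sum_erase]
  refine (integral_mul_fz_sub_mul_fz_le z hW
    (integrable_exp_sum_truncOne hmeas _) hst).trans ?_
  gcongr

lemma four_mul_exp_one_sq_add_two_le :
    4 * exp 1 ^ 2 + 2 ≤ 25.8 + 20 * exp (exp 1 ^ 2 - 2) / √(2 * π) := by
  have hsq : exp 1 ^ 2 ≤ 7.4 := by nlinarith [exp_one_lt_d9, exp_pos 1]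
  have hexp : 1 ≤ exp (exp 1 ^ 2 - 2) := one_le_exp (by nlinarith [exp_one_gt_d9])
  have hfrac : 20 * 1 / 3 ≤ 20 * exp (exp 1 ^ 2 - 2) / √(2 * π) := by
    gcongr
    exact sqrt_two_mul_pi_le_three
  linarith

lemma exp_mul_min_le_explicit (z : ℝ) {s t : ℝ} (hst : s ≤ t) (ht1 : t ≤ 1) :
    exp (-z / 2) * (4 * exp 1 * exp t + 2) * min 1 (t - s) ≤
      (25.8 + 20 * exp (exp 1 ^ 2 - 2) / √(2 * π)) * exp (-z / 2) * min 1 (|s| + |t|) := by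
  have hconst : 4 * exp 1 * exp t + 2 ≤ 25.8 + 20 * exp (exp 1 ^ 2 - 2) / √(2 * π) :=
    calc 4 * exp 1 * exp t + 2 ≤ 4 * exp 1 * exp 1 + 2 := by gcongr
      _ = 4 * exp 1 ^ 2 + 2 := by ring
      _ ≤ _ := four_mul_exp_one_sq_add_two_le
  have : 0 ≤ min 1 (t - s) := le_min zero_le_one (sub_nonneg.2 hst)
  rw [mul_comm (exp (-z / 2))]
  gcongr
  linarith [neg_abs_le s, le_abs_self t]

/-- Lemma 8.4 with explicit constants (Lemma 4.1). -/
theorem lemma84_explicit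
    {Ω : Type*} [MeasureSpace Ω] [IsProbabilityMeasure (ℙ : Measure Ω)]
    {n : ℕ} (ξ : Fin n → Ω → ℝ)
    (hmeas : ∀ i, Measurable (ξ i))
    (hindep : iIndepFun ξ ℙ)
    (hL2 : ∀ i, MemLp (ξ i) 2 ℙ)
    (hmean : ∀ i, ∫ ω, ξ i ω = 0)
    (hvar : ∑ i, ∫ ω, (ξ i ω) ^ 2 = 1)
    (z : ℝ) (hz : 2 < z) (i : Fin n) (s t : ℝ) (hst : s ≤ t) (ht1 : t ≤ 1) :
    (∫ ω, ((Wbari ξ i ω + t) * fz z (Wbari ξ i ω + t)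
        - (Wbari ξ i ω + s) * fz z (Wbari ξ i ω + s)))
      ≤ (25.8 + 20 * Real.exp (Real.exp 1 ^ 2 - 2) / Real.sqrt (2 * Real.pi))
          * Real.exp (-z / 2) * min 1 (|s| + |t|) := by
  have h := lemma84_explicit_general ξ hindep hL2 (fun j ↦ (hmean j).le) z i hst
  exact (hvar ▸ h).trans (exp_mul_min_le_explicit z hst ht1)
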